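/- arXiv:2011.14609 — 2 statements merged into one kernel-verified Lean document; each statement's English description precedes it below -/
import Mathlib

section
/- Let m and n be positive integers with n ≥ 4 even, let 0 ≤ ℓ ≤ n/2 be an integer of the same parity as m, let Γ = HTG(m,n,ℓ), and assume Γ is a normal Cayley graph of the associated generalized dihedral group G. Then Aut(Γ) acts regularly on the vertex set of Γ if and only if none of the conditions (c1), (c2), (c3) and (c4) holds. -/
namespace HTGPaper

/-- The honeycomb toroidal graph `HTG(m,n,ℓ)`. -/
def HTG (m n ℓ : ℕ) : SimpleGraph (ZMod m × ZMod n) :=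
  SimpleGraph.fromRel (fun v w =>
    (v.1 = w.1 ∧ (w.2 = v.2 + 1 ∨ w.2 = v.2 - 1)) ∨
    (v.1.val ≠ m - 1 ∧ w.1 = v.1 + 1 ∧ w.2 = v.2 ∧ v.1.val % 2 ≠ v.2.val % 2) ∨
    (v.1.val = m - 1 ∧ w.1 = 0 ∧ w.2 = v.2 + (ℓ : ZMod n) ∧ v.2.val % 2 = m % 2))

/-- Generators of the generalized dihedral group `G`. -/
inductive Gen | t | x | y

/-- Relators of the presentation of `G`. -/
def rels (m n ℓ : ℕ) : Set (FreeGroup Gen) :=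
  {FreeGroup.of Gen.t ^ 2,
   FreeGroup.of Gen.x ^ (n / 2),
   FreeGroup.of Gen.y ^ m * (FreeGroup.of Gen.x ^ ((ℓ + m) / 2))⁻¹,
   FreeGroup.of Gen.t * FreeGroup.of Gen.x * (FreeGroup.of Gen.t)⁻¹ * FreeGroup.of Gen.x,
   FreeGroup.of Gen.t * FreeGroup.of Gen.y * (FreeGroup.of Gen.t)⁻¹ * FreeGroup.of Gen.y,
   FreeGroup.of Gen.x * FreeGroup.of Gen.y * (FreeGroup.of Gen.x)⁻¹ * (FreeGroup.of Gen.y)⁻¹}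

/-- The group `G = ⟨t,x,y | t², x^{n/2}, y^m x^{-(ℓ+m)/2}, txt⁻¹x, tyt⁻¹y, [x,y]⟩`. -/
abbrev G (m n ℓ : ℕ) : Type := PresentedGroup (rels m n ℓ)

def gent (m n ℓ : ℕ) : G m n ℓ := PresentedGroup.of Gen.t
def genx (m n ℓ : ℕ) : G m n ℓ := PresentedGroup.of Gen.x
def geny (m n ℓ : ℕ) : G m n ℓ := PresentedGroup.of Gen.y

/-- The connection set `{t, tx, ty}`. -/
def S (m n ℓ : ℕ) : Set (G m n ℓ) :=
  {gent m n ℓ, gent m n ℓ * genx m n ℓ, gent m n ℓ * geny m n ℓ}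

/-- The Cayley graph of a group with respect to a subset. -/
def cayley (H : Type*) [Group H] (T : Set H) : SimpleGraph H :=
  SimpleGraph.fromRel (fun g h => ∃ s ∈ T, h = g * s)

/-- The Cayley graph of an additive group with respect to a subset. -/
def addCayley (H : Type*) [AddGroup H] (T : Set H) : SimpleGraph H :=
  SimpleGraph.fromRel (fun g h => ∃ s ∈ T, h = g + s)

/-- `Cay(H;T)` is a normal Cayley graph of `H` if the left regular representation `H_L`
is a normal subgroup of the automorphism group, i.e. every conjugate of a left
translation by a graph automorphism is again a left translation. -/
def IsNormalCayley (H : Type*) [Group H] (T : Set H) : Prop :=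
  ∀ (f : cayley H T ≃g cayley H T) (a : H), ∃ b : H,
    ∀ g : H, f (a * f.symm g) = b * g

/-- An `s`-arc of a graph: `s+1` vertices, consecutive ones adjacent, and any three
consecutive vertices pairwise distinct. -/
def IsSArc {V : Type*} (Γ : SimpleGraph V) (s : ℕ) (p : Fin (s + 1) → V) : Prop :=
  (∀ i : Fin s, Γ.Adj (p i.castSucc) (p i.succ)) ∧
  ∀ i j : Fin (s + 1), (i : ℕ) + 2 = (j : ℕ) → p i ≠ p j

/-- A graph is `s`-arc-transitive if its automorphism group is transitive on `s`-arcs. -/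
def IsSArcTransitive {V : Type*} (Γ : SimpleGraph V) (s : ℕ) : Prop :=
  ∀ p q : Fin (s + 1) → V, IsSArc Γ s p → IsSArc Γ s q →
    ∃ f : Γ ≃g Γ, ∀ i, f (p i) = q i

/-- A graph is `s`-arc-regular if its automorphism group is regular on `s`-arcs. -/
def IsSArcRegular {V : Type*} (Γ : SimpleGraph V) (s : ℕ) : Prop :=
  ∀ p q : Fin (s + 1) → V, IsSArc Γ s p → IsSArc Γ s q →
    ∃! f : Γ ≃g Γ, ∀ i, f (p i) = q i

/-- A graph is arc-transitive if it is `1`-arc-transitive. -/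
def IsArcTransitive {V : Type*} (Γ : SimpleGraph V) : Prop :=
  IsSArcTransitive Γ 1

/-- The generalized prism `GPr(k)`. -/
def GPr (k : ℕ) : SimpleGraph (ZMod 2 × ZMod (2 * k)) :=
  SimpleGraph.fromRel (fun v w =>
    (v.1 = w.1 ∧ (w.2 = v.2 + 1 ∨ w.2 = v.2 - 1)) ∨
    (Even v.2.val ∧ w.1 = v.1 + 1 ∧ w.2 = v.2 + 1))

/-- The cubic graph on `k` vertices given by LCF-type data `f`. -/
def lcfGraph (k : ℕ) (f : ℕ → ℤ) : SimpleGraph (ZMod k) :=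
  SimpleGraph.fromRel (fun v w => w = v + 1 ∨ w = v + (f v.val : ZMod k))

/-- The cube graph `Q₃`, LCF notation `[3,-3]⁴`. -/
def cubeGraph : SimpleGraph (ZMod 8) :=
  lcfGraph 8 (fun i => if i % 2 = 0 then 3 else -3)

/-- The Heawood graph, LCF notation `[5,-5]⁷`. -/
def heawood : SimpleGraph (ZMod 14) :=
  lcfGraph 14 (fun i => if i % 2 = 0 then 5 else -5)

/-- The Möbius–Kantor graph, LCF notation `[5,-5]⁸`. -/
def mobiusKantor : SimpleGraph (ZMod 16) :=
  lcfGraph 16 (fun i => if i % 2 = 0 then 5 else -5)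

/-- The Pappus graph, LCF notation `[5,7,-7,7,-7,-5]³`. -/
def pappus : SimpleGraph (ZMod 18) :=
  lcfGraph 18 (fun i =>
    match i % 6 with
    | 0 => 5 | 1 => 7 | 2 => -7 | 3 => 7 | 4 => -7 | _ => -5)

/-- The red edges of `HTG(m,n,ℓ) = Cay(G;{t,tx,ty})`. -/
def Red (m n ℓ : ℕ) : Set (Sym2 (G m n ℓ)) :=
  {e | ∃ g : G m n ℓ, e = s(g, g * gent m n ℓ)}

/-- The blue edges. -/
def Blue (m n ℓ : ℕ) : Set (Sym2 (G m n ℓ)) :=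
  {e | ∃ g : G m n ℓ, e = s(g, g * (gent m n ℓ * genx m n ℓ))}

/-- The green edges. -/
def Green (m n ℓ : ℕ) : Set (Sym2 (G m n ℓ)) :=
  {e | ∃ g : G m n ℓ, e = s(g, g * (gent m n ℓ * geny m n ℓ))}

/-- The three color classes. -/
def colorClasses (m n ℓ : ℕ) : Set (Set (Sym2 (G m n ℓ))) :=
  {Red m n ℓ, Blue m n ℓ, Green m n ℓ}

/-- An automorphism of `Cay(G;{t,tx,ty})` is color permuting if it preserves the
partition of the edges into the three color classes. -/
def IsColorPermuting {m n ℓ : ℕ}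
    (f : cayley (G m n ℓ) (S m n ℓ) ≃g cayley (G m n ℓ) (S m n ℓ)) : Prop :=
  ∀ C ∈ colorClasses m n ℓ, Sym2.map ⇑f '' C ∈ colorClasses m n ℓ

/-- The group `Aut(H;T)` of automorphisms of `H` fixing `T` setwise. -/
def autFixing (H : Type*) [Group H] (T : Set H) : Subgroup (MulAut H) where
  carrier := {φ | ⇑φ '' T = T}
  one_mem' := by
    show ⇑(1 : MulAut H) '' T = T
    simp
  mul_mem' := by
    intro a b ha hb
    show ⇑(a * b) '' T = T
    have h : ⇑(a * b) = ⇑a ∘ ⇑b := rfl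
    rw [h, Set.image_comp]
    rw [show ⇑b '' T = T from hb, show ⇑a '' T = T from ha]
  inv_mem' := by
    intro a ha
    show ⇑a⁻¹ '' T = T
    conv_lhs => rw [← show ⇑a '' T = T from ha]
    rw [← Set.image_comp]
    have h : ⇑a⁻¹ ∘ ⇑a = id := by
      funext g
      simp
    rw [h, Set.image_id]


/-- Condition (c1): `gcd(n, ℓ+m) = 2m` and `2mn ∣ ℓ² + 2mℓ - 3m²`. -/
def C1 (m n ℓ : ℕ) : Prop :=
  Int.gcd (n : ℤ) ((ℓ : ℤ) + m) = 2 * m ∧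
    (2 * m * n : ℤ) ∣ ((ℓ : ℤ) ^ 2 + 2 * m * ℓ - 3 * m ^ 2)

/-- Condition (c2): `gcd(n, ℓ-m) = 2m` and `2mn ∣ ℓ² - 2mℓ - 3m²`. -/
def C2 (m n ℓ : ℕ) : Prop :=
  Int.gcd (n : ℤ) ((ℓ : ℤ) - m) = 2 * m ∧
    (2 * m * n : ℤ) ∣ ((ℓ : ℤ) ^ 2 - 2 * m * ℓ - 3 * m ^ 2)

/-- Condition (c3): `ℓ ∈ {0, n/2}`. -/
def C3 (m n ℓ : ℕ) : Prop := ℓ = 0 ∨ 2 * ℓ = n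

/-- Condition (c4): `gcd(n, ℓ+m) = 2m = gcd(n, ℓ-m)` and `2mn ∣ ℓ² + 3m²`. -/
def C4 (m n ℓ : ℕ) : Prop :=
  Int.gcd (n : ℤ) ((ℓ : ℤ) + m) = 2 * m ∧ Int.gcd (n : ℤ) ((ℓ : ℤ) - m) = 2 * m ∧
    (2 * m * n : ℤ) ∣ ((ℓ : ℤ) ^ 2 + 3 * m ^ 2)

/-! ### Group-theoretic part -/

/-- Membership in the relation lattice. -/
def InL (m N p : ℕ) (a b : ℤ) : Prop := ∃ k l : ℤ, a = k * N - l * p ∧ b = l * m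

lemma InL.neg {m N p : ℕ} {a b : ℤ} (h : InL m N p a b) : InL m N p (-a) (-b) := by
  obtain ⟨k, l, rfl, rfl⟩ := h
  exact ⟨-k, -l, by ring, by ring⟩

/-- The lattice as a subgroup. -/
def Lat (m N p : ℕ) : AddSubgroup (ℤ × ℤ) where
  carrier := {v | InL m N p v.1 v.2}
  zero_mem' := ⟨0, 0, by simp, by simp⟩
  add_mem' := by
    rintro ⟨a, b⟩ ⟨c, d⟩ ⟨k, l, h1, h2⟩ ⟨k', l', h3, h4⟩
    simp only at h1 h2 h3 h4
    subst h1 h2 h3 h4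
    exact ⟨k + k', l + l', by simp; ring, by simp; ring⟩
  neg_mem' := by
    rintro ⟨a, b⟩ h
    exact InL.neg h

section grp
variable {m n ℓ : ℕ}

lemma t_sq : gent m n ℓ * gent m n ℓ = 1 := by
  have : (PresentedGroup.mk (rels m n ℓ)) (FreeGroup.of Gen.t ^ 2) = 1 :=
    PresentedGroup.one_of_mem (by simp [rels])
  rw [map_pow, pow_two] at this
  exact this

lemma x_pow : genx m n ℓ ^ (n / 2) = 1 := by
  have : (PresentedGroup.mk (rels m n ℓ)) (FreeGroup.of Gen.x ^ (n / 2)) = 1 :=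
    PresentedGroup.one_of_mem (by simp [rels])
  rw [map_pow] at this
  exact this

lemma y_pow : geny m n ℓ ^ m = genx m n ℓ ^ ((ℓ + m) / 2) := by
  have : (PresentedGroup.mk (rels m n ℓ))
      (FreeGroup.of Gen.y ^ m * (FreeGroup.of Gen.x ^ ((ℓ + m) / 2))⁻¹) = 1 :=
    PresentedGroup.one_of_mem (by simp [rels])
  rw [map_mul, map_inv, map_pow, map_pow] at this
  exact mul_inv_eq_one.mp this

lemma t_inv : (gent m n ℓ)⁻¹ = gent m n ℓ := inv_eq_of_mul_eq_one_left t_sq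

lemma txt : gent m n ℓ * genx m n ℓ * gent m n ℓ = (genx m n ℓ)⁻¹ := by
  have : (PresentedGroup.mk (rels m n ℓ)) (FreeGroup.of Gen.t * FreeGroup.of Gen.x *
      (FreeGroup.of Gen.t)⁻¹ * FreeGroup.of Gen.x) = 1 :=
    PresentedGroup.one_of_mem (by simp [rels])
  simp only [map_mul, map_inv] at this
  have h : gent m n ℓ * genx m n ℓ * (gent m n ℓ)⁻¹ * genx m n ℓ = 1 := this
  rw [t_inv] at h
  exact eq_inv_of_mul_eq_one_left h

lemma tyt : gent m n ℓ * geny m n ℓ * gent m n ℓ = (geny m n ℓ)⁻¹ := by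
  have : (PresentedGroup.mk (rels m n ℓ)) (FreeGroup.of Gen.t * FreeGroup.of Gen.y *
      (FreeGroup.of Gen.t)⁻¹ * FreeGroup.of Gen.y) = 1 :=
    PresentedGroup.one_of_mem (by simp [rels])
  simp only [map_mul, map_inv] at this
  have h : gent m n ℓ * geny m n ℓ * (gent m n ℓ)⁻¹ * geny m n ℓ = 1 := this
  rw [t_inv] at h
  exact eq_inv_of_mul_eq_one_left h

lemma xy_comm : Commute (genx m n ℓ) (geny m n ℓ) := by
  have : (PresentedGroup.mk (rels m n ℓ)) (FreeGroup.of Gen.x * FreeGroup.of Gen.y *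
      (FreeGroup.of Gen.x)⁻¹ * (FreeGroup.of Gen.y)⁻¹) = 1 :=
    PresentedGroup.one_of_mem (by simp [rels])
  simp only [map_mul, map_inv] at this
  have h : genx m n ℓ * geny m n ℓ * (genx m n ℓ)⁻¹ * (geny m n ℓ)⁻¹ = 1 := this
  rw [mul_inv_eq_one, mul_inv_eq_iff_eq_mul] at h
  exact h

/-- The element `x^a y^b`. -/
def xy (m n ℓ : ℕ) (a b : ℤ) : G m n ℓ := genx m n ℓ ^ a * geny m n ℓ ^ b

lemma xy_mul (a b c d : ℤ) : xy m n ℓ a b * xy m n ℓ c d = xy m n ℓ (a + c) (b + d) := by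
  unfold xy
  rw [zpow_add, zpow_add, mul_assoc, mul_assoc, ← mul_assoc (geny m n ℓ ^ b),
    ← mul_assoc (genx m n ℓ ^ c), ((xy_comm (m := m) (n := n) (ℓ := ℓ)).zpow_zpow c b).eq]

lemma xy_zero : xy m n ℓ 0 0 = 1 := by simp [xy]
lemma xy_x : xy m n ℓ 1 0 = genx m n ℓ := by simp [xy]
lemma xy_y : xy m n ℓ 0 1 = geny m n ℓ := by simp [xy]

lemma xy_inv (a b : ℤ) : (xy m n ℓ a b)⁻¹ = xy m n ℓ (-a) (-b) := by
  apply inv_eq_of_mul_eq_one_left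
  rw [xy_mul]; simp [xy_zero]

lemma xy_npow (a b : ℤ) (k : ℕ) : xy m n ℓ a b ^ k = xy m n ℓ (k * a) (k * b) := by
  induction k with
  | zero => simp [xy_zero]
  | succ k ih => rw [pow_succ, ih, xy_mul]; push_cast; congr 1 <;> ring

lemma xy_zpow (a b : ℤ) (k : ℤ) : xy m n ℓ a b ^ k = xy m n ℓ (k * a) (k * b) := by
  cases k with
  | ofNat k => simpa using xy_npow a b k
  | negSucc k =>
    rw [zpow_negSucc, xy_npow, xy_inv]
    congr 1 <;> (rw [Int.negSucc_eq]; push_cast; ring)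

lemma t_xy (a b : ℤ) : gent m n ℓ * xy m n ℓ a b = xy m n ℓ (-a) (-b) * gent m n ℓ := by
  have h : ∀ g : G m n ℓ, gent m n ℓ * g * gent m n ℓ = MulAut.conj (gent m n ℓ) g := by
    intro g; simp [t_inv]
  have : gent m n ℓ * xy m n ℓ a b * gent m n ℓ = xy m n ℓ (-a) (-b) := by
    rw [h]; unfold xy
    rw [map_mul, map_zpow, map_zpow, ← h, ← h, txt, tyt]; simp
  rw [← this, mul_assoc _ (gent m n ℓ) (gent m n ℓ), t_sq, mul_one]

lemma xy_of_InL {a b : ℤ} (h : InL m (n / 2) ((ℓ + m) / 2) a b) : xy m n ℓ a b = 1 := by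
  obtain ⟨k, l, rfl, rfl⟩ := h
  have h1 : xy m n ℓ ((n / 2 : ℕ)) 0 = 1 := by
    unfold xy
    rw [zpow_natCast, x_pow]; simp
  have h2 : xy m n ℓ (-((ℓ + m) / 2 : ℕ)) m = 1 := by
    unfold xy
    rw [zpow_natCast, y_pow, zpow_neg, zpow_natCast, inv_mul_cancel]
  have := congrArg₂ (· * ·) (congrArg (· ^ k) h1) (congrArg (· ^ l) h2)
  simp only [one_zpow, mul_one, xy_zpow, xy_mul] at this
  rw [← this]; congr 1 <;> (push_cast; ring)

/-- Universal property of `G`. -/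
lemma exists_hom {K : Type*} [Group K] (T X Y : K) (h1 : T * T = 1) (h2 : X ^ (n / 2) = 1)
    (h3 : Y ^ m = X ^ ((ℓ + m) / 2)) (h4 : T * X * T = X⁻¹) (h5 : T * Y * T = Y⁻¹)
    (h6 : X * Y = Y * X) :
    ∃ α : G m n ℓ →* K, α (gent m n ℓ) = T ∧ α (genx m n ℓ) = X ∧ α (geny m n ℓ) = Y := by
  let F : Gen → K := fun g => match g with | .t => T | .x => X | .y => Y
  have hT : T⁻¹ = T := inv_eq_of_mul_eq_one_left h1
  have hF : ∀ r ∈ rels m n ℓ, FreeGroup.lift F r = 1 := by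
    intro r hr
    simp only [rels, Set.mem_insert_iff, Set.mem_singleton_iff] at hr
    rcases hr with rfl | rfl | rfl | rfl | rfl | rfl
    · simp [F, pow_two, h1]
    · simp [F, h2]
    · simp [F, h3]
    · simp [F, hT, h4]
    · simp [F, hT, h5]
    · simp [F, h6]
  refine ⟨PresentedGroup.toGroup hF, ?_, ?_, ?_⟩ <;>
    simp only [gent, genx, geny, PresentedGroup.toGroup.of] <;> rfl

lemma hom_ext {K : Type*} [Group K] {α β : G m n ℓ →* K}
    (h1 : α (gent m n ℓ) = β (gent m n ℓ)) (h2 : α (genx m n ℓ) = β (genx m n ℓ))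
    (h3 : α (geny m n ℓ) = β (geny m n ℓ)) : α = β := by
  apply PresentedGroup.ext
  intro g
  cases g
  · exact h1
  · exact h2
  · exact h3

/-- The normal-form map. -/
def sig (m n ℓ : ℕ) (a b : ℤ) (e : Bool) : G m n ℓ :=
  xy m n ℓ a b * (if e then gent m n ℓ else 1)

lemma sig_surj (g : G m n ℓ) : ∃ a b e, g = sig m n ℓ a b e := by
  have hcl : g ∈ Subgroup.closure (Set.range (PresentedGroup.of (rels := rels m n ℓ))) := by
    rw [PresentedGroup.closure_range_of]; trivial
  have key : ∀ (k : Gen) a b e, ∃ a' b' e',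
      PresentedGroup.of k * sig m n ℓ a b e = sig m n ℓ a' b' e' := by
    intro k a b e
    cases k
    · refine ⟨-a, -b, !e, ?_⟩
      show gent m n ℓ * _ = _
      unfold sig
      rw [← mul_assoc, t_xy, mul_assoc]
      cases e <;> simp [t_sq]
    · refine ⟨1 + a, 0 + b, e, ?_⟩
      show genx m n ℓ * _ = _
      unfold sig
      rw [← mul_assoc, ← xy_x, xy_mul]
    · refine ⟨0 + a, 1 + b, e, ?_⟩
      show geny m n ℓ * _ = _
      unfold sig
      rw [← mul_assoc, ← xy_y, xy_mul]
  have key2 : ∀ (k : Gen) a b e, ∃ a' b' e',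
      (PresentedGroup.of k)⁻¹ * sig m n ℓ a b e = sig m n ℓ a' b' e' := by
    intro k a b e
    cases k
    · have := key Gen.t a b e
      have h : (PresentedGroup.of (rels := rels m n ℓ) Gen.t)⁻¹ = PresentedGroup.of Gen.t := t_inv
      rwa [h]
    · refine ⟨-1 + a, -0 + b, e, ?_⟩
      show (genx m n ℓ)⁻¹ * _ = _
      unfold sig
      rw [← mul_assoc, ← xy_x, xy_inv, xy_mul]
    · refine ⟨-0 + a, -1 + b, e, ?_⟩
      show (geny m n ℓ)⁻¹ * _ = _
      unfold sig
      rw [← mul_assoc, ← xy_y, xy_inv, xy_mul]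
  induction hcl using Subgroup.closure_induction_left with
  | one => exact ⟨0, 0, false, by simp [sig, xy_zero]⟩
  | mul_left x hx y hy ih =>
    obtain ⟨k, rfl⟩ := hx
    obtain ⟨a, b, e, rfl⟩ := ih
    exact key k a b e
  | inv_mul_cancel x hx y hy ih =>
    obtain ⟨k, rfl⟩ := hx
    obtain ⟨a, b, e, rfl⟩ := ih
    exact key2 k a b e

lemma sig_one {a b : ℤ} {e : Bool} (h : sig m n ℓ a b e = 1) :
    e = false ∧ InL m (n / 2) ((ℓ + m) / 2) a b := by
  let L := Lat m (n / 2) ((ℓ + m) / 2)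
  let A := (ℤ × ℤ) ⧸ L
  let tr : A → Equiv.Perm (A × Bool) := fun c =>
    { toFun := fun v => (c + v.1, v.2), invFun := fun v => (-c + v.1, v.2),
      left_inv := fun v => by simp, right_inv := fun v => by simp }
  let T : Equiv.Perm (A × Bool) :=
    { toFun := fun v => (-v.1, !v.2), invFun := fun v => (-v.1, !v.2),
      left_inv := fun v => Prod.ext (neg_neg _) (by simp),
      right_inv := fun v => Prod.ext (neg_neg _) (by simp) }
  have tr_add : ∀ c d, tr c * tr d = tr (c + d) := by
    intro c d; ext1 v; simp [tr, add_assoc]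
  have tr_zero : tr 0 = 1 := by ext1 v; simp [tr]
  have tr_inv : ∀ c, (tr c)⁻¹ = tr (-c) := by
    intro c; apply inv_eq_of_mul_eq_one_left; rw [tr_add]; simp [tr_zero]
  have tr_pow : ∀ c (k : ℕ), tr c ^ k = tr (k • c) := by
    intro c k
    induction k with
    | zero => simp [tr_zero]
    | succ k ih => rw [pow_succ, ih, tr_add, succ_nsmul]
  have tr_zpow : ∀ c (k : ℤ), tr c ^ k = tr (k • c) := by
    intro c k
    cases k with
    | ofNat k => simpa using tr_pow c k
    | negSucc k => rw [zpow_negSucc, tr_pow, tr_inv, negSucc_zsmul]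
  have conj : ∀ c, T * tr c * T = (tr c)⁻¹ := by
    intro c; rw [tr_inv]; ext1 v
    refine Prod.ext ?_ (by simp [tr, T])
    show -(c + -v.1) = -c + v.1
    rw [neg_add, neg_neg]
  let cx : A := QuotientAddGroup.mk (1, 0)
  let cy : A := QuotientAddGroup.mk (0, 1)
  have lin : ∀ a b : ℤ, a • cx + b • cy = QuotientAddGroup.mk (a, b) := by
    intro a b
    show (QuotientAddGroup.mk (a • ((1 : ℤ), (0 : ℤ)) + b • ((0 : ℤ), (1 : ℤ))) : A) = _
    simp
  have mk0 : ∀ a b : ℤ, (QuotientAddGroup.mk (a, b) : A) = 0 ↔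
      InL m (n / 2) ((ℓ + m) / 2) a b := by
    intro a b
    rw [QuotientAddGroup.eq_zero_iff]; rfl
  obtain ⟨α, ht, hx, hy⟩ := exists_hom (m := m) (n := n) (ℓ := ℓ) T (tr cx) (tr cy)
    (by ext1 v; exact Prod.ext (neg_neg _) (by simp [T]))
    (by
      rw [tr_pow, ← tr_zero]; congr 1
      have := lin (n / 2 : ℕ) 0
      rw [zero_smul, add_zero, natCast_zsmul] at this
      rw [this, mk0]
      exact ⟨1, 0, by simp, by simp⟩)
    (by
      rw [tr_pow, tr_pow]; congr 1
      have := lin (-((ℓ + m) / 2 : ℕ)) m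
      rw [(mk0 _ _).2 ⟨0, 1, by simp, by simp⟩, neg_smul, natCast_zsmul, natCast_zsmul] at this
      exact (neg_add_eq_zero.mp this).symm)
    (conj _) (conj _) (by rw [tr_add, tr_add, add_comm])
  have h2 := congrArg (fun g => α g (0, false)) h
  simp only [sig, xy, map_mul, map_zpow, hx, hy, tr_zpow, tr_add, lin, map_one] at h2
  cases e
  · simp [tr] at h2
    exact ⟨rfl, (mk0 _ _).1 h2⟩
  · simp [tr, ht, T] at h2

lemma xy_eq_one {a b : ℤ} : xy m n ℓ a b = 1 ↔ InL m (n / 2) ((ℓ + m) / 2) a b :=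
  ⟨fun h => (sig_one (e := false) (by simpa [sig] using h)).2, xy_of_InL⟩

lemma xy_eq {a b c d : ℤ} :
    xy m n ℓ a b = xy m n ℓ c d ↔ InL m (n / 2) ((ℓ + m) / 2) (a - c) (b - d) := by
  rw [← xy_eq_one, ← mul_inv_eq_one, xy_inv, xy_mul, sub_eq_add_neg, sub_eq_add_neg]

lemma sig_eq {a b c d : ℤ} {e e' : Bool} : sig m n ℓ a b e = sig m n ℓ c d e' ↔
    e = e' ∧ InL m (n / 2) ((ℓ + m) / 2) (a - c) (b - d) := by
  constructor
  · intro h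
    have hc : e = e' := by
      by_contra hne
      have h' : sig m n ℓ (a - c) (b - d) true = 1 := by
        rw [sub_eq_neg_add, sub_eq_neg_add]
        unfold sig at h ⊢
        rw [← xy_mul, ← xy_inv]
        cases e <;> cases e' <;> simp at hne h ⊢
        · rw [h, mul_assoc, mul_assoc, t_sq]; simp
        · rw [mul_assoc, h]; simp
      have := (sig_one h').1
      simp at this
    subst hc
    refine ⟨rfl, ?_⟩
    rw [← xy_eq]
    exact mul_right_cancel h
  · rintro ⟨rfl, h⟩
    unfold sig; rw [xy_eq.2 h]

end grp

/-! ### The isomorphism with the honeycomb toroidal graph -/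

/-- Neighbours in the honeycomb lattice. -/
def Nb (a b : ℤ) (e : Bool) (c d : ℤ) (e' : Bool) : Prop :=
  (e = false ∧ e' = true ∧ ((c = a ∧ d = b) ∨ (c = a - 1 ∧ d = b) ∨ (c = a ∧ d = b - 1))) ∨
  (e = true ∧ e' = false ∧ ((c = a ∧ d = b) ∨ (c = a + 1 ∧ d = b) ∨ (c = a ∧ d = b + 1)))

section graph
variable {m n ℓ : ℕ}

lemma sq_of_mem_S {s : G m n ℓ} (hs : s ∈ S m n ℓ) : s * s = 1 := by
  have key : ∀ a b, gent m n ℓ * xy m n ℓ a b * (gent m n ℓ * xy m n ℓ a b) = 1 := by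
    intro a b
    have h := t_xy (m := m) (n := n) (ℓ := ℓ) (-a) (-b)
    rw [neg_neg, neg_neg] at h
    rw [mul_assoc, ← mul_assoc (xy m n ℓ a b), ← h, mul_assoc (gent m n ℓ), ← mul_assoc, t_sq,
      xy_mul]
    simp [xy_zero]
  rcases hs with rfl | rfl | rfl
  · exact t_sq
  · simpa [xy_x] using key 1 0
  · simpa [xy_y] using key 0 1

lemma t_xy_ne_one (a b : ℤ) : gent m n ℓ * xy m n ℓ a b ≠ 1 := by
  rw [t_xy]
  intro h
  have := (sig_one (e := true) (by simpa [sig] using h)).1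
  simp at this

lemma one_notMem_S {s : G m n ℓ} (hs : s ∈ S m n ℓ) : s ≠ 1 := by
  rcases hs with rfl | rfl | rfl
  · simpa [xy_zero] using t_xy_ne_one (m := m) (n := n) (ℓ := ℓ) 0 0
  · simpa [xy_x] using t_xy_ne_one (m := m) (n := n) (ℓ := ℓ) 1 0
  · simpa [xy_y] using t_xy_ne_one (m := m) (n := n) (ℓ := ℓ) 0 1

lemma cay_adj {g h : G m n ℓ} :
    (cayley (G m n ℓ) (S m n ℓ)).Adj g h ↔ ∃ s ∈ S m n ℓ, h = g * s := by
  unfold cayley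
  rw [SimpleGraph.fromRel_adj]
  constructor
  · rintro ⟨-, h1 | ⟨s, hs, rfl⟩⟩
    · exact h1
    · exact ⟨s, hs, by rw [mul_assoc, sq_of_mem_S hs, mul_one]⟩
  · rintro ⟨s, hs, rfl⟩
    refine ⟨?_, Or.inl ⟨s, hs, rfl⟩⟩
    intro h
    exact one_notMem_S hs (by simpa using h)

lemma sig_mul_f (a b c d : ℤ) : sig m n ℓ a b false * (gent m n ℓ * xy m n ℓ c d) =
    sig m n ℓ (a - c) (b - d) true := by
  simp only [sig]
  rw [t_xy]
  simp [← mul_assoc, xy_mul, sub_eq_add_neg]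

lemma sig_mul_t (a b c d : ℤ) : sig m n ℓ a b true * (gent m n ℓ * xy m n ℓ c d) =
    sig m n ℓ (a + c) (b + d) false := by
  simp only [sig]
  simp only [if_true]
  rw [mul_assoc, ← mul_assoc (gent m n ℓ), t_sq]
  simp [xy_mul]

lemma mem_S {s : G m n ℓ} : s ∈ S m n ℓ ↔ ∃ c d : ℤ, s = gent m n ℓ * xy m n ℓ c d ∧
    ((c = 0 ∧ d = 0) ∨ (c = 1 ∧ d = 0) ∨ (c = 0 ∧ d = 1)) := by
  constructor
  · rintro (rfl | rfl | rfl)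
    · exact ⟨0, 0, by simp [xy_zero], by simp⟩
    · exact ⟨1, 0, by simp [xy_x], by simp⟩
    · exact ⟨0, 1, by simp [xy_y], by simp⟩
  · rintro ⟨c, d, rfl, ⟨rfl, rfl⟩ | ⟨rfl, rfl⟩ | ⟨rfl, rfl⟩⟩
    · left; simp [xy_zero]
    · right; left; simp [xy_x]
    · right; right; simp [xy_y]

lemma cay_adj_sig {a b : ℤ} {e : Bool} {h : G m n ℓ} :
    (cayley (G m n ℓ) (S m n ℓ)).Adj (sig m n ℓ a b e) h ↔
      ∃ c d e', h = sig m n ℓ c d e' ∧ Nb a b e c d e' := by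
  rw [cay_adj]
  constructor
  · rintro ⟨s, hs, rfl⟩
    obtain ⟨c, d, rfl, hcd⟩ := mem_S.1 hs
    cases e
    · exact ⟨_, _, _, sig_mul_f _ _ _ _, Or.inl ⟨rfl, rfl, by omega⟩⟩
    · exact ⟨_, _, _, sig_mul_t _ _ _ _, Or.inr ⟨rfl, rfl, by omega⟩⟩
  · rintro ⟨c, d, e', rfl, ⟨rfl, rfl, hh⟩ | ⟨rfl, rfl, hh⟩⟩
    · refine ⟨gent m n ℓ * xy m n ℓ (a - c) (b - d), mem_S.2 ⟨_, _, rfl, by omega⟩, ?_⟩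
      rw [sig_mul_f]; simp
    · refine ⟨gent m n ℓ * xy m n ℓ (c - a) (d - b), mem_S.2 ⟨_, _, rfl, by omega⟩, ?_⟩
      rw [sig_mul_t]; simp

/-- The covering map from the brick wall. -/
def bw (m n ℓ : ℕ) (i j : ℤ) : ZMod m × ZMod n := ((i : ZMod m), ((j + ℓ * (i / m) : ℤ) : ZMod n))

/-- The covering map in honeycomb coordinates. -/
def tau (m n ℓ : ℕ) (a b : ℤ) (e : Bool) : ZMod m × ZMod n :=
  bw m n ℓ b (2 * a + b + (if e then 1 else 0))

lemma bw_eq (hm : 0 < m) {i j i' j' : ℤ} : bw m n ℓ i j = bw m n ℓ i' j' ↔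
    ∃ k l : ℤ, i - i' = l * m ∧ j - j' = k * n - l * ℓ := by
  have hm' : (m : ℤ) ≠ 0 := by exact_mod_cast hm.ne'
  unfold bw
  rw [Prod.mk.injEq, ZMod.intCast_eq_intCast_iff_dvd_sub, ZMod.intCast_eq_intCast_iff_dvd_sub]
  have hdiv : ∀ l : ℤ, i = i' + l * m → i / m = i' / m + l := by
    rintro l rfl
    rw [Int.add_mul_ediv_right _ _ hm']
  constructor
  · rintro ⟨⟨l, hl⟩, ⟨k, hk⟩⟩
    have h1 : i = i' + (-l) * m := by linarith
    rw [hdiv _ h1] at hk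
    exact ⟨-k, -l, by linarith, by linarith⟩
  · rintro ⟨k, l, h1, h2⟩
    have h3 : i = i' + l * m := by linarith
    refine ⟨⟨-l, by linarith⟩, ⟨-k, ?_⟩⟩
    rw [hdiv _ h3]; linarith

lemma tau_eq (hm : 0 < m) (hne : Even n) (hpar : ℓ % 2 = m % 2) {a b c d : ℤ} {e e' : Bool} :
    tau m n ℓ a b e = tau m n ℓ c d e' ↔
    e = e' ∧ InL m (n / 2) ((ℓ + m) / 2) (a - c) (b - d) := by
  obtain ⟨N, rfl⟩ := hne
  obtain ⟨p, hp⟩ : ∃ p, ℓ + m = 2 * p := ⟨(ℓ + m) / 2, by omega⟩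
  have e1 : (ℓ + m) / 2 = p := by omega
  have e2 : (N + N) / 2 = N := by omega
  have hp' : (ℓ : ℤ) = 2 * p - m := by omega
  unfold tau
  rw [bw_eq hm, e1, e2]
  push_cast
  rw [hp']
  constructor
  · rintro ⟨k, l, h1, h2⟩
    have h3 : 2 * (a - c) + ((if e then 1 else 0) - (if e' then 1 else 0)) = 2 * (k * N - l * p) := by
      linear_combination h2 - h1
    have h4 : e = e' := by
      cases e <;> cases e' <;> simp at h3 ⊢ <;> omega
    subst h4
    exact ⟨rfl, k, l, by linarith, h1⟩
  · rintro ⟨rfl, k, l, h1, h2⟩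
    exact ⟨k, l, h2, by linear_combination 2 * h1 + h2⟩

lemma tau_surj (hm : 0 < m) (hn : 0 < n) (v : ZMod m × ZMod n) : ∃ a b e, v = tau m n ℓ a b e := by
  haveI : NeZero m := ⟨hm.ne'⟩
  haveI : NeZero n := ⟨hn.ne'⟩
  obtain ⟨i, j⟩ := v
  have h : (i, j) = bw m n ℓ (i.val : ℤ) (j.val : ℤ) := by
    unfold bw
    have : ((i.val : ℤ) / (m : ℤ)) = 0 :=
      Int.ediv_eq_zero_of_lt (by positivity) (by exact_mod_cast ZMod.val_lt i)
    rw [this]; simp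
  rw [h]
  rcases Int.even_or_odd' ((j.val : ℤ) - i.val) with ⟨a, ha | ha⟩
  · exact ⟨a, i.val, false, by unfold tau; congr 1; simp only [Bool.false_eq_true, if_false]; omega⟩
  · exact ⟨a, i.val, true, by unfold tau; congr 1; simp only [if_true]; omega⟩

/-- The relation used to define `HTG`. -/
def HRel (m n ℓ : ℕ) (v w : ZMod m × ZMod n) : Prop :=
    (v.1 = w.1 ∧ (w.2 = v.2 + 1 ∨ w.2 = v.2 - 1)) ∨
    (v.1.val ≠ m - 1 ∧ w.1 = v.1 + 1 ∧ w.2 = v.2 ∧ v.1.val % 2 ≠ v.2.val % 2) ∨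
    (v.1.val = m - 1 ∧ w.1 = 0 ∧ w.2 = v.2 + (ℓ : ZMod n) ∧ v.2.val % 2 = m % 2)

lemma htg_adj {v w : ZMod m × ZMod n} :
    (HTG m n ℓ).Adj v w ↔ v ≠ w ∧ (HRel m n ℓ v w ∨ HRel m n ℓ w v) := by
  unfold HTG HRel
  rw [SimpleGraph.fromRel_adj]

lemma hrel_bw (hm : 0 < m) (hn : 0 < n) (hne : Even n) (hpar : ℓ % 2 = m % 2) (i j : ℤ)
    (w : ZMod m × ZMod n) : HRel m n ℓ (bw m n ℓ i j) w ↔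
      (w = bw m n ℓ i (j + 1) ∨ w = bw m n ℓ i (j - 1) ∨
        ((i + j) % 2 = 1 ∧ w = bw m n ℓ (i + 1) j)) := by
  haveI : NeZero m := ⟨hm.ne'⟩
  haveI : NeZero n := ⟨hn.ne'⟩
  have hm' : (0 : ℤ) < m := by exact_mod_cast hm
  set q := i / (m : ℤ) with hq
  set r := i % (m : ℤ) with hr
  have hi : i = m * q + r := (Int.mul_ediv_add_emod i m).symm
  have hr0 : 0 ≤ r := Int.emod_nonneg _ hm'.ne'
  have hr1 : r < m := Int.emod_lt_of_pos _ hm'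
  have v1 : (((bw m n ℓ i j).1.val : ℕ) : ℤ) = r := by
    unfold bw; simp only [ZMod.val_intCast]; rfl
  have v2 : ((((bw m n ℓ i j).2.val : ℕ) : ℤ)) % 2 = (j + ℓ * q) % 2 := by
    unfold bw; simp only [ZMod.val_intCast]
    apply Int.emod_emod_of_dvd
    exact_mod_cast hne.two_dvd
  have pl : ((ℓ : ℤ) * q) % 2 = ((m : ℤ) * q) % 2 := by
    rw [Int.mul_emod, Int.mul_emod (m : ℤ)]
    congr 2; omega
  generalize hV1 : (bw m n ℓ i j).1.val = V1 at v1
  generalize hV2 : (bw m n ℓ i j).2.val = V2 at v2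
  unfold HRel
  rw [hV1, hV2]
  obtain ⟨w1, w2⟩ := w
  have A1 : ((bw m n ℓ i j).1 = w1 ∧ (w2 = (bw m n ℓ i j).2 + 1 ∨ w2 = (bw m n ℓ i j).2 - 1)) ↔
      ((w1, w2) = bw m n ℓ i (j + 1) ∨ (w1, w2) = bw m n ℓ i (j - 1)) := by
    unfold bw
    simp only [Prod.mk.injEq]
    push_cast
    rw [show (j : ZMod n) + 1 + ℓ * ((i / (m : ℤ) : ℤ) : ZMod n) = j + ℓ * ((i / (m : ℤ) : ℤ) : ZMod n) + 1 by ring,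
      show (j : ZMod n) - 1 + ℓ * ((i / (m : ℤ) : ℤ) : ZMod n) = j + ℓ * ((i / (m : ℤ) : ℤ) : ZMod n) - 1 by ring,
      eq_comm (a := (i : ZMod m))]
    tauto
  rw [A1, or_assoc]
  refine or_congr_right (or_congr_right ?_)
  generalize hX : (m : ℤ) * q = X at *
  generalize hY : (ℓ : ℤ) * q = Y at *
  by_cases hc : V1 = m - 1
  · have hr2 : r = m - 1 := by omega
    have d1 : (i + 1) / (m : ℤ) = q + 1 := by
      rw [show i + 1 = (q + 1) * m by rw [hi, hr2, ← hX]; ring, Int.mul_ediv_cancel _ hm'.ne']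
    have d2 : (((i + 1 : ℤ)) : ZMod m) = 0 := by
      rw [ZMod.intCast_zmod_eq_zero_iff_dvd]
      exact ⟨q + 1, by rw [hi, hr2, ← hX]; ring⟩
    have hp : (V2 % 2 = m % 2) ↔ (i + j) % 2 = 1 := by omega
    simp only [hc, ne_eq, not_true, false_and, false_or, true_and, hp]
    unfold bw
    rw [d1, d2, ← hq, Prod.mk.injEq]
    push_cast
    rw [show (j : ZMod n) + ℓ * ((q : ZMod n) + 1) = j + ℓ * (q : ZMod n) + ℓ by ring]
    tauto
  · have d1 : (i + 1) / (m : ℤ) = q := by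
      rw [show i + 1 = (r + 1) + q * m by rw [hi, ← hX]; ring, Int.add_mul_ediv_right _ _ hm'.ne',
        Int.ediv_eq_zero_of_lt (by omega) (by omega), zero_add]
    have hp : (V1 % 2 ≠ V2 % 2) ↔ (i + j) % 2 = 1 := by omega
    simp only [hc, not_false_eq_true, ne_eq, false_and, or_false, true_and]
    rw [← ne_eq, hp]
    unfold bw
    rw [d1, ← hq, Prod.mk.injEq]
    push_cast
    tauto

lemma htg_adj_tau (hm : 0 < m) (hn : 0 < n) (hne : Even n) (hpar : ℓ % 2 = m % 2)
    {a b : ℤ} {e : Bool} {v : ZMod m × ZMod n} :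
    (HTG m n ℓ).Adj (tau m n ℓ a b e) v ↔
      ∃ c d e', v = tau m n ℓ c d e' ∧ Nb a b e c d e' := by
  have hF : ∀ a b w, HRel m n ℓ (tau m n ℓ a b false) w ↔
      w = tau m n ℓ a b true ∨ w = tau m n ℓ (a - 1) b true := by
    intro a b w
    unfold tau
    rw [hrel_bw hm hn hne hpar]
    have : ¬ ((b + (2 * a + b + (if false = true then 1 else 0))) % 2 = 1) := by simp; omega
    simp only [this, false_and, or_false]
    simp only [Bool.false_eq_true, if_true, if_false]
    ring_nf
  have hT : ∀ a b w, HRel m n ℓ (tau m n ℓ a b true) w ↔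
      w = tau m n ℓ (a + 1) b false ∨ w = tau m n ℓ a b false ∨ w = tau m n ℓ a (b + 1) false := by
    intro a b w
    unfold tau
    rw [hrel_bw hm hn hne hpar]
    have : ((b + (2 * a + b + (if true = true then 1 else 0))) % 2 = 1) := by simp; omega
    rw [and_iff_right this]
    simp only [Bool.false_eq_true, if_true, if_false]
    ring_nf
  have teq := @tau_eq m n ℓ hm hne hpar
  rw [htg_adj]
  constructor
  · rintro ⟨-, h | h⟩
    · cases e
      · rw [hF] at h
        rcases h with rfl | rfl
        · exact ⟨_, _, _, rfl, Or.inl ⟨rfl, rfl, by omega⟩⟩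
        · exact ⟨_, _, _, rfl, Or.inl ⟨rfl, rfl, by omega⟩⟩
      · rw [hT] at h
        rcases h with rfl | rfl | rfl
        · exact ⟨_, _, _, rfl, Or.inr ⟨rfl, rfl, by omega⟩⟩
        · exact ⟨_, _, _, rfl, Or.inr ⟨rfl, rfl, by omega⟩⟩
        · exact ⟨_, _, _, rfl, Or.inr ⟨rfl, rfl, by omega⟩⟩
    · obtain ⟨c, d, e', rfl⟩ := tau_surj (ℓ := ℓ) hm hn v
      have fin : ∀ {u v u' v' : ℤ}, InL m (n / 2) ((ℓ + m) / 2) u v → u' = -u → v' = -v →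
          InL m (n / 2) ((ℓ + m) / 2) u' v' := by
        rintro u v _ _ h rfl rfl; exact h.neg
      cases e'
      · rw [hF] at h
        rcases h with h | h <;> rw [teq] at h <;> obtain ⟨rfl, h⟩ := h
        · exact ⟨a, b, false, teq.2 ⟨rfl, fin h (by ring) (by ring)⟩, Or.inr ⟨rfl, rfl, by omega⟩⟩
        · exact ⟨a + 1, b, false, teq.2 ⟨rfl, fin h (by ring) (by ring)⟩, Or.inr ⟨rfl, rfl, by omega⟩⟩
      · rw [hT] at h
        rcases h with h | h | h <;> rw [teq] at h <;> obtain ⟨rfl, h⟩ := h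
        · exact ⟨a - 1, b, true, teq.2 ⟨rfl, fin h (by ring) (by ring)⟩, Or.inl ⟨rfl, rfl, by omega⟩⟩
        · exact ⟨a, b, true, teq.2 ⟨rfl, fin h (by ring) (by ring)⟩, Or.inl ⟨rfl, rfl, by omega⟩⟩
        · exact ⟨a, b - 1, true, teq.2 ⟨rfl, fin h (by ring) (by ring)⟩, Or.inl ⟨rfl, rfl, by omega⟩⟩
  · rintro ⟨c, d, e', rfl, h⟩
    refine ⟨?_, ?_⟩
    · rw [Ne, teq]
      rintro ⟨rfl, -⟩
      rcases h with ⟨h1, h2, -⟩ | ⟨h1, h2, -⟩ <;> simp [h1] at h2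
    · rcases h with ⟨rfl, rfl, ⟨rfl, rfl⟩ | ⟨rfl, rfl⟩ | ⟨rfl, rfl⟩⟩ |
        ⟨rfl, rfl, ⟨rfl, rfl⟩ | ⟨rfl, rfl⟩ | ⟨rfl, rfl⟩⟩ <;> rw [hF, hT] <;> simp

theorem exists_iso (hm : 0 < m) (hn : 0 < n) (hne : Even n) (hpar : ℓ % 2 = m % 2) :
    Nonempty (cayley (G m n ℓ) (S m n ℓ) ≃g HTG m n ℓ) := by
  choose fa fb fe hf using (sig_surj (m := m) (n := n) (ℓ := ℓ))
  let F : G m n ℓ → ZMod m × ZMod n := fun g => tau m n ℓ (fa g) (fb g) (fe g)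
  have hF : ∀ a b e, F (sig m n ℓ a b e) = tau m n ℓ a b e := by
    intro a b e
    rw [tau_eq hm hne hpar, ← sig_eq, ← hf]
  have hbij : Function.Bijective F := by
    constructor
    · intro g h hgh
      have := (tau_eq hm hne hpar).1 hgh
      rw [← sig_eq, ← hf, ← hf] at this
      exact this
    · intro v
      obtain ⟨a, b, e, rfl⟩ := tau_surj (ℓ := ℓ) hm hn v
      exact ⟨_, hF a b e⟩
  refine ⟨⟨Equiv.ofBijective F hbij, ?_⟩⟩
  intro g h
  obtain ⟨a, b, e, rfl⟩ := sig_surj g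
  show (HTG m n ℓ).Adj (F _) (F h) ↔ _
  rw [hF, htg_adj_tau hm hn hne hpar, cay_adj_sig]
  simp only [← hF, hbij.1.eq_iff]

end graph

/-! ### Arithmetic of the conditions -/

section arith
variable {m n ℓ N p : ℕ}

lemma gcd_of_coprime {l k : ℤ} (h : IsCoprime l k) {a b : ℤ} (ha : a = 2 * m * l)
    (hb : b = 2 * m * k) : Int.gcd a b = 2 * m := by
  subst ha hb
  rw [Int.gcd_mul_left, Int.isCoprime_iff_gcd_eq_one.1 h]
  simp [Int.natAbs_mul]

lemma dvd_aux (hm : 0 < m) (hn : n = 2 * N) {l F X : ℤ} (hN : (N : ℤ) = l * m)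
    (hX : X = 4 * m ^ 2 * F) : (2 * m * n : ℤ) ∣ X ↔ l ∣ F := by
  have hm' : (m : ℤ) ≠ 0 := by exact_mod_cast hm.ne'
  have h4 : (4 * m ^ 2 : ℤ) ≠ 0 := by positivity
  subst hX hn
  push_cast
  rw [hN, show (2 * m * (2 * (l * m)) : ℤ) = 4 * m ^ 2 * l by ring, mul_dvd_mul_iff_left h4]

lemma C1_iff (hm : 0 < m) (hn : n = 2 * N) (hp : ℓ + m = 2 * p) :
    C1 m n ℓ ↔ ∃ l k : ℤ, (N : ℤ) = l * m ∧ (p : ℤ) = k * m ∧ l ∣ k ^ 2 - 1 := by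
  have hp' : (ℓ : ℤ) = 2 * p - m := by omega
  unfold C1
  constructor
  · rintro ⟨h1, h2⟩
    have d1 : ((2 * m : ℕ) : ℤ) ∣ (n : ℤ) := h1 ▸ Int.gcd_dvd_left _ _
    have d2 : ((2 * m : ℕ) : ℤ) ∣ (ℓ : ℤ) + m := h1 ▸ Int.gcd_dvd_right _ _
    obtain ⟨l, hl⟩ := d1
    obtain ⟨k, hk⟩ := d2
    push_cast [hn] at hl hk
    have e1 : (N : ℤ) = l * m := by linarith
    have e2 : (p : ℤ) = k * m := by linarith
    refine ⟨l, k, e1, e2, ?_⟩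
    rw [dvd_aux hm hn e1 (F := k ^ 2 - 1) (by rw [hp', e2]; ring)] at h2
    exact h2
  · rintro ⟨l, k, e1, e2, h⟩
    refine ⟨?_, (dvd_aux hm hn e1 (F := k ^ 2 - 1) (by rw [hp', e2]; ring)).2 h⟩
    obtain ⟨c, hc⟩ := h
    refine gcd_of_coprime (l := l) (k := k) ⟨-c, k, by linear_combination hc⟩ ?_ ?_
    · rw [hn]; push_cast; rw [e1]; ring
    · rw [hp', e2]; ring

lemma C2_iff (hm : 0 < m) (hn : n = 2 * N) (hp : ℓ + m = 2 * p) :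
    C2 m n ℓ ↔ ∃ l k : ℤ, (N : ℤ) = l * m ∧ (p : ℤ) = k * m ∧ l ∣ k ^ 2 - 2 * k := by
  have hp' : (ℓ : ℤ) = 2 * p - m := by omega
  unfold C2
  constructor
  · rintro ⟨h1, h2⟩
    have d1 : ((2 * m : ℕ) : ℤ) ∣ (n : ℤ) := h1 ▸ Int.gcd_dvd_left _ _
    have d2 : ((2 * m : ℕ) : ℤ) ∣ (ℓ : ℤ) - m := h1 ▸ Int.gcd_dvd_right _ _
    obtain ⟨l, hl⟩ := d1
    obtain ⟨k, hk⟩ := d2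
    push_cast [hn] at hl hk
    have e1 : (N : ℤ) = l * m := by linarith
    have e2 : (p : ℤ) = (k + 1) * m := by linarith
    refine ⟨l, k + 1, e1, e2, ?_⟩
    rw [dvd_aux hm hn e1 (F := (k + 1) ^ 2 - 2 * (k + 1)) (by rw [hp', e2]; ring)] at h2
    exact h2
  · rintro ⟨l, k, e1, e2, h⟩
    refine ⟨?_, (dvd_aux hm hn e1 (F := k ^ 2 - 2 * k) (by rw [hp', e2]; ring)).2 h⟩
    obtain ⟨c, hc⟩ := h
    refine gcd_of_coprime (l := l) (k := k - 1) ⟨-c, k - 1, by linear_combination hc⟩ ?_ ?_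
    · rw [hn]; push_cast; rw [e1]; ring
    · rw [hp', e2]; ring

lemma C4_iff (hm : 0 < m) (hn : n = 2 * N) (hp : ℓ + m = 2 * p) :
    C4 m n ℓ ↔ ∃ l k : ℤ, (N : ℤ) = l * m ∧ (p : ℤ) = k * m ∧ l ∣ k ^ 2 - k + 1 := by
  have hp' : (ℓ : ℤ) = 2 * p - m := by omega
  unfold C4
  constructor
  · rintro ⟨h1, -, h2⟩
    have d1 : ((2 * m : ℕ) : ℤ) ∣ (n : ℤ) := h1 ▸ Int.gcd_dvd_left _ _
    have d2 : ((2 * m : ℕ) : ℤ) ∣ (ℓ : ℤ) + m := h1 ▸ Int.gcd_dvd_right _ _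
    obtain ⟨l, hl⟩ := d1
    obtain ⟨k, hk⟩ := d2
    push_cast [hn] at hl hk
    have e1 : (N : ℤ) = l * m := by linarith
    have e2 : (p : ℤ) = k * m := by linarith
    refine ⟨l, k, e1, e2, ?_⟩
    rw [dvd_aux hm hn e1 (F := k ^ 2 - k + 1) (by rw [hp', e2]; ring)] at h2
    exact h2
  · rintro ⟨l, k, e1, e2, h⟩
    refine ⟨?_, ?_, (dvd_aux hm hn e1 (F := k ^ 2 - k + 1) (by rw [hp', e2]; ring)).2 h⟩
    · obtain ⟨c, hc⟩ := h
      refine gcd_of_coprime (l := l) (k := k) ⟨c, 1 - k, by linear_combination -hc⟩ ?_ ?_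
      · rw [hn]; push_cast; rw [e1]; ring
      · rw [hp', e2]; ring
    · obtain ⟨c, hc⟩ := h
      refine gcd_of_coprime (l := l) (k := k - 1) ⟨c, -k, by linear_combination -hc⟩ ?_ ?_
      · rw [hn]; push_cast; rw [e1]; ring
      · rw [hp', e2]; ring

/-- From a lattice point `(sN, N)` with `N ≠ 0` we get divisibility by `m`. -/
lemma div_of_InL (hN : 0 < N) {s : ℤ} (h : InL m N p (s * N) N) :
    ∃ l k : ℤ, (N : ℤ) = l * m ∧ (p : ℤ) = k * m ∧ l ≠ 0 := by
  obtain ⟨k, l, h1, h2⟩ := h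
  have hN' : (N : ℤ) ≠ 0 := by exact_mod_cast hN.ne'
  have hl : l ≠ 0 := by rintro rfl; simp at h2; omega
  refine ⟨l, k - s, h2, ?_, hl⟩
  apply mul_left_cancel₀ hl
  linear_combination h1 + (k - s) * h2

lemma C1_InL (hm : 0 < m) (hN : 0 < N) (hn : n = 2 * N) (hp : ℓ + m = 2 * p) :
    C1 m n ℓ ↔ InL m N p 0 N ∧ InL m N p m (-p) := by
  have hm' : (m : ℤ) ≠ 0 := by exact_mod_cast hm.ne'
  rw [C1_iff hm hn hp]
  constructor
  · rintro ⟨l, k, e1, e2, c, hc⟩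
    exact ⟨⟨k, l, by rw [e1, e2]; ring, e1⟩,
      ⟨-c, -k, by rw [e1, e2]; linear_combination (-m : ℤ) * hc, by rw [e2]; ring⟩⟩
  · rintro ⟨h1, k', l', h2, h3⟩
    obtain ⟨l, k, e1, e2, hl⟩ := div_of_InL (s := 0) hN (by simpa using h1)
    refine ⟨l, k, e1, e2, -k', ?_⟩
    have h4 : l' = -k := mul_right_cancel₀ hm' (by linear_combination -h3 - e2)
    apply mul_right_cancel₀ hm'
    rw [h4, e1, e2] at h2
    linear_combination -h2

lemma C2_InL (hm : 0 < m) (hN : 0 < N) (hn : n = 2 * N) (hp : ℓ + m = 2 * p) :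
    C2 m n ℓ ↔ InL m N p N (-N) ∧ InL m N p (-p) (p - m) := by
  have hm' : (m : ℤ) ≠ 0 := by exact_mod_cast hm.ne'
  rw [C2_iff hm hn hp]
  constructor
  · rintro ⟨l, k, e1, e2, c, hc⟩
    exact ⟨⟨1 - k, -l, by rw [e1, e2]; ring, by rw [e1]; ring⟩,
      ⟨c, k - 1, by rw [e1, e2]; linear_combination (m : ℤ) * hc, by rw [e2]; ring⟩⟩
  · rintro ⟨h1, k', l', h2, h3⟩
    obtain ⟨l, k, e1, e2, hl⟩ := div_of_InL (s := -1) hN (by simpa using h1.neg)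
    refine ⟨l, k, e1, e2, k', ?_⟩
    have h4 : l' = k - 1 := mul_right_cancel₀ hm' (by linear_combination -h3 + e2)
    apply mul_right_cancel₀ hm'
    rw [h4, e1, e2] at h2
    linear_combination h2

lemma C4_InL (hm : 0 < m) (hN : 0 < N) (hn : n = 2 * N) (hp : ℓ + m = 2 * p) :
    C4 m n ℓ ↔ InL m N p (-N) N ∧ InL m N p (p - m) (-p) := by
  have hm' : (m : ℤ) ≠ 0 := by exact_mod_cast hm.ne'
  rw [C4_iff hm hn hp]
  constructor
  · rintro ⟨l, k, e1, e2, c, hc⟩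
    exact ⟨⟨k - 1, l, by rw [e1, e2]; ring, by rw [e1]⟩,
      ⟨-c, -k, by rw [e1, e2]; linear_combination (-m : ℤ) * hc, by rw [e2]; ring⟩⟩
  · rintro ⟨h1, k', l', h2, h3⟩
    obtain ⟨l, k, e1, e2, hl⟩ := div_of_InL (s := -1) hN (by simpa using h1)
    refine ⟨l, k, e1, e2, -k', ?_⟩
    have h4 : l' = -k := mul_right_cancel₀ hm' (by linear_combination -h3 - e2)
    apply mul_right_cancel₀ hm'
    rw [h4, e1, e2] at h2
    linear_combination -h2

lemma C4_of_InL' (hm : 0 < m) (hN : 0 < N) (hn : n = 2 * N) (hp : ℓ + m = 2 * p)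
    (h1 : InL m N p 0 (-N)) (h2 : InL m N p m (p - m)) : C4 m n ℓ := by
  have hm' : (m : ℤ) ≠ 0 := by exact_mod_cast hm.ne'
  rw [C4_iff hm hn hp]
  obtain ⟨k', l', h2, h3⟩ := h2
  obtain ⟨l, k, e1, e2, hl⟩ := div_of_InL (s := 0) hN (by simpa using h1.neg)
  refine ⟨l, k, e1, e2, k', ?_⟩
  have h4 : l' = k - 1 := mul_right_cancel₀ hm' (by linear_combination -h3 + e2)
  apply mul_right_cancel₀ hm'
  rw [h4, e1, e2] at h2
  linear_combination h2

lemma C3_InL (hm : 0 < m) (hN : 0 < N) (hn : n = 2 * N) (hp : ℓ + m = 2 * p) (hl : ℓ ≤ N) :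
    C3 m n ℓ ↔ InL m N p (p - m) m := by
  have hm' : (m : ℤ) ≠ 0 := by exact_mod_cast hm.ne'
  unfold C3
  constructor
  · rintro (h | h)
    · exact ⟨0, 1, by omega, by simp⟩
    · exact ⟨1, 1, by omega, by simp⟩
  · rintro ⟨k, l, h1, h2⟩
    have h4 : l = 1 := mul_right_cancel₀ hm' (by linear_combination -h2)
    have h5 : (ℓ : ℤ) = k * N := by rw [h4] at h1; push_cast [← @Nat.cast_inj ℤ] at hp; linarith
    have hk0 : 0 ≤ k := by
      by_contra hk
      have : k * N < 0 := mul_neg_of_neg_of_pos (by omega) (by omega)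
      omega
    have hk1 : k ≤ 1 := by
      by_contra hk
      have : (2 : ℤ) * N ≤ k * N := mul_le_mul_of_nonneg_right (by omega) (by omega)
      omega
    interval_cases k <;> omega

lemma x_notInL (hm : 0 < m) (hN : 2 ≤ N) : ¬ InL m N p 1 0 := by
  rintro ⟨k, l, h1, h2⟩
  have hm' : (m : ℤ) ≠ 0 := by exact_mod_cast hm.ne'
  have hl : l = 0 := by simpa [hm.ne'] using h2.symm
  subst hl
  have : (N : ℤ) ∣ 1 := ⟨k, by linarith⟩
  have := Int.le_of_dvd one_pos this
  omega

lemma y_notInL (hm : 0 < m) (hN : 2 ≤ N) (hp : ℓ + m = 2 * p) (hl : ℓ ≤ N) :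
    ¬ InL m N p 0 1 := by
  rintro ⟨k, l, h1, h2⟩
  have hm1 : (m : ℤ) = 1 := Int.eq_one_of_dvd_one (by positivity) ⟨l, by linarith⟩
  rw [hm1] at h2
  have hl1 : l = 1 := by omega
  subst hl1
  have hd : (N : ℤ) ∣ p := ⟨k, by linarith⟩
  have := Int.le_of_dvd (by omega) hd
  omega

lemma xny_InL (hm : 0 < m) (hN : 2 ≤ N) (hp : ℓ + m = 2 * p) (hl : ℓ ≤ N)
    (h : InL m N p 1 (-1)) : m = 1 ∧ ℓ = 1 := by
  obtain ⟨k, l, h1, h2⟩ := h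
  have hm1 : (m : ℤ) = 1 := Int.eq_one_of_dvd_one (by positivity) ⟨-l, by linarith⟩
  rw [hm1] at h2
  have hl1 : l = -1 := by omega
  subst hl1
  have hk : k = 0 := by
    rcases lt_trichotomy k 0 with hk | hk | hk
    · have : k * N ≤ -1 * N := mul_le_mul_of_nonneg_right (by omega) (by omega)
      omega
    · exact hk
    · have : 1 * (N : ℤ) ≤ k * N := mul_le_mul_of_nonneg_right (by omega) (by omega)
      omega
  subst hk
  omega

end arith

/-! ### Automorphisms -/

section aut
variable {m n ℓ : ℕ}

lemma hom_cond (φ : G m n ℓ →* G m n ℓ) {a1 b1 a2 b2 : ℤ} (hx : φ (genx m n ℓ) = xy m n ℓ a1 b1)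
    (hy : φ (geny m n ℓ) = xy m n ℓ a2 b2) :
    InL m (n / 2) ((ℓ + m) / 2) ((n / 2 : ℕ) * a1) ((n / 2 : ℕ) * b1) ∧
    InL m (n / 2) ((ℓ + m) / 2) (m * a2 - ((ℓ + m) / 2 : ℕ) * a1)
      (m * b2 - ((ℓ + m) / 2 : ℕ) * b1) := by
  constructor
  · have := congrArg φ (x_pow (m := m) (n := n) (ℓ := ℓ))
    rwa [map_pow, hx, xy_npow, map_one, xy_eq_one] at this
  · have := congrArg φ (y_pow (m := m) (n := n) (ℓ := ℓ))
    rwa [map_pow, map_pow, hx, hy, xy_npow, xy_npow, xy_eq] at this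

lemma tt_xy (a b c d : ℤ) : gent m n ℓ * xy m n ℓ a b * (gent m n ℓ * xy m n ℓ c d) =
    xy m n ℓ (c - a) (d - b) := by
  rw [t_xy a b, mul_assoc, ← mul_assoc (gent m n ℓ), t_sq, one_mul, xy_mul]
  congr 1 <;> ring

lemma exists_end {a0 b0 a1 b1 a2 b2 : ℤ}
    (h1 : InL m (n / 2) ((ℓ + m) / 2) ((n / 2 : ℕ) * a1) ((n / 2 : ℕ) * b1))
    (h2 : InL m (n / 2) ((ℓ + m) / 2) (m * a2 - ((ℓ + m) / 2 : ℕ) * a1)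
      (m * b2 - ((ℓ + m) / 2 : ℕ) * b1)) :
    ∃ α : G m n ℓ →* G m n ℓ,
      (∀ c d, α (xy m n ℓ c d) = xy m n ℓ (c * a1 + d * a2) (c * b1 + d * b2)) ∧
      (∀ c d, α (gent m n ℓ * xy m n ℓ c d) =
        gent m n ℓ * xy m n ℓ (a0 + (c * a1 + d * a2)) (b0 + (c * b1 + d * b2))) := by
  have conj : ∀ a b, gent m n ℓ * xy m n ℓ a0 b0 * xy m n ℓ a b * (gent m n ℓ * xy m n ℓ a0 b0) =
      (xy m n ℓ a b)⁻¹ := by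
    intro a b
    rw [mul_assoc (gent m n ℓ), xy_mul, tt_xy, xy_inv]
    congr 1 <;> ring
  obtain ⟨α, ht, hx, hy⟩ := exists_hom (m := m) (n := n) (ℓ := ℓ)
    (gent m n ℓ * xy m n ℓ a0 b0) (xy m n ℓ a1 b1) (xy m n ℓ a2 b2)
    (by rw [tt_xy]; simp [xy_zero]) (by rw [xy_npow, xy_eq_one]; exact h1)
    (by rw [xy_npow, xy_npow, xy_eq]; exact h2) (conj _ _) (conj _ _)
    (by rw [xy_mul, xy_mul, add_comm a1, add_comm b1])
  have hxy : ∀ c d, α (xy m n ℓ c d) = xy m n ℓ (c * a1 + d * a2) (c * b1 + d * b2) := by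
    intro c d
    conv_lhs => unfold xy
    rw [map_mul, map_zpow, map_zpow, hx, hy, xy_zpow, xy_zpow, xy_mul]
  refine ⟨α, hxy, ?_⟩
  intro c d
  rw [map_mul, ht, hxy, mul_assoc, xy_mul]

/-- Rigidity: only the identity automorphism fixes `1`. -/
def Rigid (m n ℓ : ℕ) : Prop :=
  ∀ f : cayley (G m n ℓ) (S m n ℓ) ≃g cayley (G m n ℓ) (S m n ℓ), f 1 = 1 → ∀ g, f g = g

lemma rigid_apply (h : Rigid m n ℓ) (α β : G m n ℓ →* G m n ℓ)
    (h1 : α.comp β = MonoidHom.id _) (h2 : β.comp α = MonoidHom.id _)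
    (hα : ∀ s ∈ S m n ℓ, α s ∈ S m n ℓ) (hβ : ∀ s ∈ S m n ℓ, β s ∈ S m n ℓ) (g : G m n ℓ) :
    α g = g := by
  have l1 : ∀ g, α (β g) = g := fun g => DFunLike.congr_fun h1 g
  have l2 : ∀ g, β (α g) = g := fun g => DFunLike.congr_fun h2 g
  let f : cayley (G m n ℓ) (S m n ℓ) ≃g cayley (G m n ℓ) (S m n ℓ) :=
    { toFun := α, invFun := β, left_inv := l2, right_inv := l1,
      map_rel_iff' := by
        intro a b
        show (cayley (G m n ℓ) (S m n ℓ)).Adj (α a) (α b) ↔ _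
        rw [cay_adj, cay_adj]
        constructor
        · rintro ⟨s, hs, hb⟩
          refine ⟨β s, hβ s hs, ?_⟩
          have := congrArg β hb
          rwa [map_mul, l2, l2] at this
        · rintro ⟨s, hs, rfl⟩
          exact ⟨α s, hα s hs, by rw [map_mul]⟩ }
  exact h f (map_one α) g

lemma regular_iff_rigid (e : cayley (G m n ℓ) (S m n ℓ) ≃g HTG m n ℓ) :
    (∀ u v : ZMod m × ZMod n, ∃! f : HTG m n ℓ ≃g HTG m n ℓ, f u = v) ↔ Rigid m n ℓ := by
  constructor
  · intro h f hf g
    have hu := (h (e 1) (e 1)).unique (y₁ := (e.symm.trans f).trans e)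
      (y₂ := SimpleGraph.Iso.refl) (by simp [hf]) (by simp)
    have := DFunLike.congr_fun hu (e g)
    simpa using this
  · intro h u v
    let tr : G m n ℓ → (cayley (G m n ℓ) (S m n ℓ) ≃g cayley (G m n ℓ) (S m n ℓ)) := fun a =>
      { toEquiv := Equiv.mulLeft a
        map_rel_iff' := by
          intro b c
          show (cayley (G m n ℓ) (S m n ℓ)).Adj (a * b) (a * c) ↔ _
          rw [cay_adj, cay_adj]
          simp only [mul_assoc, mul_right_inj] }
    have htr : ∀ a b, tr a b = a * b := fun a b => rfl
    refine ⟨(e.symm.trans (tr (e.symm v * (e.symm u)⁻¹))).trans e, ?_, ?_⟩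
    · simp [htr]
    · intro f hf
      have key := h (((tr (e.symm u)).trans ((e.trans f).trans e.symm)).trans (tr (e.symm v)⁻¹))
        (by simp [htr, hf])
      ext1 w
      have := key ((e.symm u)⁻¹ * e.symm w)
      simp only [RelIso.trans_apply, htr, mul_inv_cancel_left, RelIso.apply_symm_apply] at this
      rw [inv_mul_eq_iff_eq_mul, ← mul_assoc] at this
      simp only [RelIso.trans_apply, htr]
      rw [← this]; simp

end aut

section main
variable {m n ℓ : ℕ}

/-- Rigidity excludes any nontrivial affine symmetry of finite order. -/
lemma rigid_data (h : Rigid m n ℓ) {a0 b0 a1 b1 a2 b2 : ℤ}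
    (h1 : InL m (n / 2) ((ℓ + m) / 2) ((n / 2 : ℕ) * a1) ((n / 2 : ℕ) * b1))
    (h2 : InL m (n / 2) ((ℓ + m) / 2) (m * a2 - ((ℓ + m) / 2 : ℕ) * a1)
      (m * b2 - ((ℓ + m) / 2 : ℕ) * b1))
    (hS : ∀ c d : ℤ, ((c = 0 ∧ d = 0) ∨ (c = 1 ∧ d = 0) ∨ (c = 0 ∧ d = 1)) →
      gent m n ℓ * xy m n ℓ (a0 + (c * a1 + d * a2)) (b0 + (c * b1 + d * b2)) ∈ S m n ℓ)
    (hord : ∀ α : G m n ℓ →* G m n ℓ,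
      (∀ c d, α (xy m n ℓ c d) = xy m n ℓ (c * a1 + d * a2) (c * b1 + d * b2)) →
      (∀ c d, α (gent m n ℓ * xy m n ℓ c d) =
        gent m n ℓ * xy m n ℓ (a0 + (c * a1 + d * a2)) (b0 + (c * b1 + d * b2))) →
      α.comp (α.comp α) = MonoidHom.id _ ∨ α.comp α = MonoidHom.id _) :
    xy m n ℓ a0 b0 = 1 ∧ xy m n ℓ a1 b1 = xy m n ℓ 1 0 := by
  obtain ⟨α, hα1, hα2⟩ := exists_end (a0 := a0) (b0 := b0) h1 h2
  have hαS : ∀ s ∈ S m n ℓ, α s ∈ S m n ℓ := by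
    intro s hs
    obtain ⟨c, d, rfl, hcd⟩ := mem_S.1 hs
    rw [hα2]; exact hS c d hcd
  have hid : ∀ g, α g = g := by
    rcases hord α hα1 hα2 with h3 | h3
    · exact rigid_apply h α (α.comp α) h3 (by rw [MonoidHom.comp_assoc]; exact h3) hαS
        (fun s hs => hαS _ (hαS s hs))
    · exact rigid_apply h α α h3 h3 hαS hαS
  constructor
  · have := hα2 0 0
    rw [hid] at this
    have := mul_left_cancel this
    rw [xy_zero] at this
    rw [this]; simp
  · have := hα1 1 0
    rw [hid] at this
    rw [this]; simp

lemma id_of_data {α : G m n ℓ →* G m n ℓ} (ht : α (gent m n ℓ * xy m n ℓ 0 0) = gent m n ℓ * xy m n ℓ 0 0)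
    (hx : α (xy m n ℓ 1 0) = xy m n ℓ 1 0) (hy : α (xy m n ℓ 0 1) = xy m n ℓ 0 1) :
    α = MonoidHom.id _ := by
  apply hom_ext
  · simpa [xy_zero] using ht
  · simpa [xy_x] using hx
  · simpa [xy_y] using hy

theorem rigid_iff (hm : 0 < m) (hn : 4 ≤ n) (hne : Even n)
    (hl : ℓ ≤ n / 2) (hpar : ℓ % 2 = m % 2)
    (hnorm : IsNormalCayley (G m n ℓ) (S m n ℓ)) :
    Rigid m n ℓ ↔ (¬ C1 m n ℓ ∧ ¬ C2 m n ℓ ∧ ¬ C3 m n ℓ ∧ ¬ C4 m n ℓ) := by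
  have hnN : n = 2 * (n / 2) := by have := hne.two_dvd; omega
  have hp : ℓ + m = 2 * ((ℓ + m) / 2) := by omega
  have hN2 : 2 ≤ n / 2 := by omega
  have hN : 0 < n / 2 := by omega
  have hx1 : xy m n ℓ 1 0 ≠ 1 := by rw [Ne, xy_eq_one]; exact x_notInL hm hN2
  have hy1 : xy m n ℓ 0 1 ≠ 1 := by rw [Ne, xy_eq_one]; exact y_notInL hm hN2 hp hl
  have hord2 : ∀ {c d : ℤ}, (c = 0 ∧ d = 0) ∨ (c = 1 ∧ d = 0) ∨ (c = 0 ∧ d = 1) →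
      gent m n ℓ * xy m n ℓ c d ∈ S m n ℓ := fun h => mem_S.2 ⟨_, _, rfl, h⟩
  constructor
  · intro h
    refine ⟨?_, ?_, ?_, ?_⟩
    · intro hc
      by_cases h11 : m = 1 ∧ ℓ = 1
      · have hI : InL m (n / 2) ((ℓ + m) / 2) 1 (-1) := by
          refine ⟨0, -1, ?_, ?_⟩
          · rw [h11.1, h11.2]; norm_num
          · rw [h11.1]; norm_num
        refine hx1 (rigid_data h (a0 := 1) (b0 := 0) (a1 := -1) (b1 := 0) (a2 := 0) (b2 := -1)
          ⟨-1, 0, by ring, by ring⟩ ?_ ?_ ?_).1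
        · convert hI using 1
          · rw [h11.1, h11.2]; norm_num
          · rw [h11.1, h11.2]; norm_num
        · rintro c d (⟨rfl, rfl⟩ | ⟨rfl, rfl⟩ | ⟨rfl, rfl⟩)
          · exact hord2 (by norm_num)
          · exact hord2 (by norm_num)
          · have : xy m n ℓ 1 (-1) = xy m n ℓ 0 0 := by rw [xy_eq]; simpa using hI
            norm_num
            rw [this]
            exact hord2 (by norm_num)
        · intro α h1 h2
          right
          apply id_of_data <;> simp [h1, h2]
      · rw [C1_InL hm hN hnN hp] at hc
        have := (rigid_data h (a0 := 0) (b0 := 0) (a1 := 0) (b1 := 1) (a2 := 1) (b2 := 0)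
          (by simpa using hc.1) (by simpa using hc.2) (fun c d hcd => hord2 (by omega)) ?_).2
        · rw [eq_comm, xy_eq] at this
          exact h11 (xny_InL hm hN2 hp hl (by simpa using this))
        · intro α h1 h2
          right
          apply id_of_data <;> simp [h1, h2]
    · intro hc
      rw [C2_InL hm hN hnN hp] at hc
      refine hy1 (rigid_data h (a0 := 0) (b0 := 1) (a1 := 1) (b1 := -1) (a2 := 0) (b2 := -1)
          (by simpa using hc.1) (by convert hc.2 using 1 <;> ring)
          (fun c d hcd => hord2 (by omega)) ?_).1
      intro α h1 h2
      right
      apply id_of_data <;> simp [h1, h2]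
    · intro hc
      rw [C3_InL hm hN hnN hp hl] at hc
      refine hx1 (rigid_data h (a0 := 1) (b0 := 0) (a1 := -1) (b1 := 0) (a2 := -1) (b2 := 1)
          ⟨-1, 0, by ring, by ring⟩ (by convert hc using 1 <;> ring)
          (fun c d hcd => hord2 (by omega)) ?_).1
      intro α h1 h2
      right
      apply id_of_data <;> simp [h1, h2]
    · intro hc
      rw [C4_InL hm hN hnN hp] at hc
      refine hx1 (rigid_data h (a0 := 1) (b0 := 0) (a1 := -1) (b1 := 1) (a2 := -1) (b2 := 0)
          (by convert hc.1 using 1 <;> ring) (by convert hc.2 using 1 <;> ring)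
          (fun c d hcd => hord2 (by omega)) ?_).1
      intro α h1 h2
      left
      apply id_of_data <;> simp [h1, h2]
  · rintro ⟨n1, n2, n3, n4⟩ f hf
    have hf' : f.symm 1 = 1 := by
      have := f.symm_apply_apply 1
      rwa [hf] at this
    have hmul : ∀ a b, f (a * b) = f a * f b := by
      intro a b
      obtain ⟨c, hc⟩ := hnorm f a
      have e1 := hc 1
      rw [hf', mul_one, mul_one] at e1
      have e2 := hc (f b)
      rwa [RelIso.symm_apply_apply, ← e1] at e2
    let φ : G m n ℓ →* G m n ℓ := MonoidHom.mk' f hmul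
    have hφ : ∀ g, φ g = f g := fun g => rfl
    have hinj : Function.Injective φ := f.injective
    have hS : ∀ s ∈ S m n ℓ, φ s ∈ S m n ℓ := by
      intro s hs
      have : (cayley (G m n ℓ) (S m n ℓ)).Adj (f 1) (f s) :=
        f.map_rel_iff.2 (cay_adj.2 ⟨s, hs, by simp⟩)
      rw [hf, cay_adj] at this
      obtain ⟨s', hs', h⟩ := this
      rw [hφ, h, one_mul]; exact hs'
    obtain ⟨c0, d0, e0, k0⟩ := mem_S.1 (hS (gent m n ℓ * xy m n ℓ 0 0) (hord2 (by simp)))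
    obtain ⟨c1, d1, e1, k1⟩ := mem_S.1 (hS (gent m n ℓ * xy m n ℓ 1 0) (hord2 (by simp)))
    obtain ⟨c2, d2, e2, k2⟩ := mem_S.1 (hS (gent m n ℓ * xy m n ℓ 0 1) (hord2 (by simp)))
    have hX : φ (genx m n ℓ) = xy m n ℓ (c1 - c0) (d1 - d0) := by
      rw [← tt_xy, ← e0, ← e1, ← map_mul, tt_xy, ← xy_x]; norm_num
    have hY : φ (geny m n ℓ) = xy m n ℓ (c2 - c0) (d2 - d0) := by
      rw [← tt_xy, ← e0, ← e2, ← map_mul, tt_xy, ← xy_y]; norm_num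
    obtain ⟨i1, i2⟩ := hom_cond φ hX hY
    have hxy : xy m n ℓ 1 0 ≠ xy m n ℓ 0 1 := by
      rw [Ne, xy_eq]
      intro h
      obtain ⟨h1, h2⟩ := xny_InL hm hN2 hp hl (by simpa using h)
      apply n1
      rw [C1_iff hm hnN hp]
      exact ⟨(n / 2 : ℕ), 1, by rw [h1]; simp, by rw [h1, h2]; norm_num, by norm_num⟩
    have p01 : ¬ (c0 = c1 ∧ d0 = d1) := by
      rintro ⟨rfl, rfl⟩
      rw [← e0] at e1
      exact hx1 (by simpa [xy_zero] using hinj e1)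
    have p02 : ¬ (c0 = c2 ∧ d0 = d2) := by
      rintro ⟨rfl, rfl⟩
      rw [← e0] at e2
      exact hy1 (by simpa [xy_zero] using hinj e2)
    have p12 : ¬ (c1 = c2 ∧ d1 = d2) := by
      rintro ⟨rfl, rfl⟩
      rw [← e1] at e2
      exact hxy (mul_left_cancel (hinj e2)).symm
    suffices hh : φ = MonoidHom.id _ by
      intro g
      rw [← hφ, hh]; rfl
    rcases k0 with ⟨rfl, rfl⟩ | ⟨rfl, rfl⟩ | ⟨rfl, rfl⟩ <;>
    rcases k1 with ⟨rfl, rfl⟩ | ⟨rfl, rfl⟩ | ⟨rfl, rfl⟩ <;>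
    try exact absurd ⟨rfl, rfl⟩ p01
    all_goals
      rcases k2 with ⟨rfl, rfl⟩ | ⟨rfl, rfl⟩ | ⟨rfl, rfl⟩ <;>
      first
      | exact absurd ⟨rfl, rfl⟩ p02
      | exact absurd ⟨rfl, rfl⟩ p12
      | skip
    · exact id_of_data e0 (by rw [xy_x, hX, ← xy_x]; norm_num) (by rw [xy_y, hY, ← xy_y]; norm_num)
    · exact absurd ((C1_InL hm hN hnN hp).2
        ⟨by convert i1 using 1 <;> ring, by convert i2 using 1 <;> ring⟩) n1
    · exact absurd ((C3_InL hm hN hnN hp hl).2 (by convert i2 using 1 <;> ring)) n3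
    · exact absurd ((C4_InL hm hN hnN hp).2
        ⟨by convert i1 using 1 <;> ring, by convert i2 using 1 <;> ring⟩) n4
    · exact absurd (C4_of_InL' hm hN hnN hp (by convert i1 using 1 <;> ring)
        (by convert i2 using 1 <;> ring)) n4
    · exact absurd ((C2_InL hm hN hnN hp).2
        ⟨by convert i1 using 1 <;> ring, by convert i2 using 1 <;> ring⟩) n2

end main

/-- **Theorem 2, fourth item.** Assuming `Γ = HTG(m,n,ℓ)` is a normal Cayley graph of `G`,
`Aut(Γ)` acts regularly on the vertex set of `Γ` iff none of (c1)–(c4) holds. -/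
theorem statement4 (m n ℓ : ℕ) (hm : 0 < m) (hn : 4 ≤ n) (hne : Even n)
    (hl : ℓ ≤ n / 2) (hpar : ℓ % 2 = m % 2)
    (hnorm : IsNormalCayley (G m n ℓ) (S m n ℓ)) :
    (∀ u v : ZMod m × ZMod n, ∃! f : HTG m n ℓ ≃g HTG m n ℓ, f u = v) ↔
      (¬ C1 m n ℓ ∧ ¬ C2 m n ℓ ∧ ¬ C3 m n ℓ ∧ ¬ C4 m n ℓ) := by
  obtain ⟨e⟩ := exists_iso (ℓ := ℓ) hm (by omega : 0 < n) hne hpar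
  rw [regular_iff_rigid e, rigid_iff hm hn hne hl hpar hnorm]

end HTGPaper
end

section
/- Let m and n be positive integers with n ≥ 4 even, let 0 ≤ ℓ ≤ n−1 be an integer of the same parity as m, and let G = ⟨t, x, y | t² = 1, x^{n/2} = 1, y^m = x^{(ℓ+m)/2}, txt = x⁻¹, tyt = y⁻¹, xy = yx⟩. Then in G the element x has order n/2, the element y has order mn/gcd(n, ℓ+m), and the element x⁻¹y has order mn/gcd(n, ℓ−m). -/
namespace HTGPaper

/-- The subgroup of exponent pairs `(a, b)` with `x ^ a * y ^ b = 1`. -/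
def relSub (m k c : ℤ) : AddSubgroup (ℤ × ℤ) where
  carrier := {p | ∃ q : ℤ, p.2 = m * q ∧ k ∣ p.1 + c * q}
  zero_mem' := ⟨0, by simp, by simp⟩
  add_mem' := by
    rintro ⟨a, b⟩ ⟨a', b'⟩ ⟨q, h1, h2⟩ ⟨q', h1', h2'⟩
    refine ⟨q + q', ?_, ?_⟩
    · simp only at *
      simp only [Prod.mk_add_mk]
      rw [h1, h1']; ring
    · show k ∣ (a + a') + c * (q + q')
      rw [show (a + a') + c * (q + q') = (a + c * q) + (a' + c * q') by ring]
      exact dvd_add h2 h2'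
  neg_mem' := by
    rintro ⟨a, b⟩ ⟨q, h1, h2⟩
    refine ⟨-q, ?_, ?_⟩
    · simp only [Prod.neg_mk] at *
      rw [h1]; ring
    · show k ∣ -a + c * -q
      rw [show -a + c * -q = -(a + c * q) by ring]
      exact (dvd_neg).2 h2

/-- The images of the generators as permutations of an abelian group. -/
def genPerm {A : Type*} [AddCommGroup A] (u v : A) : Gen → Equiv.Perm A
  | Gen.t => Equiv.neg A
  | Gen.x => Equiv.addLeft u
  | Gen.y => Equiv.addLeft v

theorem addLeft_pow' {A : Type*} [AddCommGroup A] (u : A) (N : ℕ) :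
    (Equiv.addLeft u : Equiv.Perm A) ^ N = Equiv.addLeft (N • u) := by
  induction N with
  | zero => ext z; simp
  | succ N ih => rw [pow_succ, ih]; ext z; simp [add_smul, add_assoc]

theorem addLeft_zpow' {A : Type*} [AddCommGroup A] (u : A) (N : ℤ) :
    (Equiv.addLeft u : Equiv.Perm A) ^ N = Equiv.addLeft (N • u) := by
  obtain ⟨N, rfl | rfl⟩ := N.eq_nat_or_neg
  · simp [addLeft_pow']
  · rw [zpow_neg, zpow_natCast, addLeft_pow', inv_eq_iff_mul_eq_one]
    ext z; simp

theorem genPerm_rels {A : Type*} [AddCommGroup A] (u v : A) (m n ℓ : ℕ)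
    (hu : (n / 2) • u = 0) (hv : m • v = ((ℓ + m) / 2) • u) :
    ∀ r ∈ rels m n ℓ, FreeGroup.lift (genPerm u v) r = 1 := by
  intro r hr
  simp only [rels, Set.mem_insert_iff, Set.mem_singleton_iff] at hr
  rcases hr with rfl | rfl | rfl | rfl | rfl | rfl
  · ext z; simp [genPerm, pow_two]
  · ext z; simp [genPerm, addLeft_pow', hu]
  · rw [map_mul, map_inv, mul_inv_eq_one]
    simp [genPerm, addLeft_pow', hv]
  · rw [map_mul, map_mul, map_mul, map_inv, mul_assoc, mul_assoc]
    ext z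
    simp only [FreeGroup.lift_apply_of, genPerm, Equiv.Perm.mul_apply]
    rw [show (Equiv.neg A : Equiv.Perm A)⁻¹ = Equiv.neg A from rfl]
    simp
  · rw [map_mul, map_mul, map_mul, map_inv, mul_assoc, mul_assoc]
    ext z
    simp only [FreeGroup.lift_apply_of, genPerm, Equiv.Perm.mul_apply]
    rw [show (Equiv.neg A : Equiv.Perm A)⁻¹ = Equiv.neg A from rfl]
    simp
  · rw [map_mul, map_mul, map_mul, map_inv, map_inv, mul_inv_eq_one, mul_inv_eq_iff_eq_mul]
    ext z
    simp [genPerm, add_left_comm]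

theorem genx_pow (m n ℓ : ℕ) : genx m n ℓ ^ (n / 2) = 1 :=
  PresentedGroup.one_of_mem (rels := rels m n ℓ) (x := FreeGroup.of Gen.x ^ (n / 2))
    (by simp [rels])

theorem geny_pow (m n ℓ : ℕ) : geny m n ℓ ^ m = genx m n ℓ ^ ((ℓ + m) / 2) :=
  mul_inv_eq_one.1 (PresentedGroup.one_of_mem (rels := rels m n ℓ)
    (x := FreeGroup.of Gen.y ^ m * (FreeGroup.of Gen.x ^ ((ℓ + m) / 2))⁻¹) (by simp [rels]))

theorem genxy_comm (m n ℓ : ℕ) : Commute (genx m n ℓ) (geny m n ℓ) :=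
  mul_inv_eq_iff_eq_mul.1 (mul_inv_eq_one.1 (PresentedGroup.one_of_mem (rels := rels m n ℓ)
    (x := FreeGroup.of Gen.x * FreeGroup.of Gen.y * (FreeGroup.of Gen.x)⁻¹ *
      (FreeGroup.of Gen.y)⁻¹) (by simp [rels])))

theorem key (m n ℓ : ℕ) (a b : ℤ) :
    genx m n ℓ ^ a * geny m n ℓ ^ b = 1 ↔
      ∃ q : ℤ, b = m * q ∧ ((n / 2 : ℕ) : ℤ) ∣ a + ((ℓ + m) / 2 : ℕ) * q := by
  constructor
  · intro h
    let H := relSub m (n / 2 : ℕ) ((ℓ + m) / 2 : ℕ)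
    let u : (ℤ × ℤ) ⧸ H := QuotientAddGroup.mk (1, 0)
    let v : (ℤ × ℤ) ⧸ H := QuotientAddGroup.mk (0, 1)
    have hu : (n / 2) • u = 0 := by
      refine (QuotientAddGroup.eq_zero_iff ((n / 2) • ((1, 0) : ℤ × ℤ))).2 ?_
      exact ⟨0, by simp, by simp⟩
    have hv : m • v = ((ℓ + m) / 2) • u := by
      rw [← sub_eq_zero]
      refine (QuotientAddGroup.eq_zero_iff
        (m • ((0, 1) : ℤ × ℤ) - ((ℓ + m) / 2) • ((1, 0) : ℤ × ℤ))).2 ?_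
      exact ⟨1, by simp, by simp⟩
    have h2 := congrArg (PresentedGroup.toGroup (genPerm_rels u v m n ℓ hu hv)) h
    rw [map_mul, map_zpow, map_zpow, map_one, genx, geny, PresentedGroup.toGroup.of,
      PresentedGroup.toGroup.of] at h2
    simp only [genPerm, addLeft_zpow'] at h2
    have h3 := congrArg (fun e : Equiv.Perm ((ℤ × ℤ) ⧸ H) => e 0) h2
    simp only [Equiv.Perm.mul_apply, Equiv.coe_addLeft, add_zero, Equiv.Perm.one_apply] at h3
    have h4 := (QuotientAddGroup.eq_zero_iff (N := H)
      (a • ((1, 0) : ℤ × ℤ) + b • ((0, 1) : ℤ × ℤ))).1 h3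
    obtain ⟨q, h5, h6⟩ := h4
    exact ⟨q, by simpa using h5, by simpa using h6⟩
  · rintro ⟨q, rfl, r, hr⟩
    rw [zpow_mul, zpow_natCast, geny_pow, ← zpow_natCast, ← zpow_mul, ← zpow_add, hr, zpow_mul,
      zpow_natCast, genx_pow, one_zpow]

theorem order_aux {K : Type*} [Group K] (g : K) (m k : ℕ) (d : ℤ) (hk : 0 < k)
    (h : ∀ N : ℕ, g ^ N = 1 ↔ ∃ q : ℤ, (N : ℤ) = m * q ∧ (k : ℤ) ∣ d * q) :
    orderOf g = m * (2 * k) / Int.gcd ((2 * k : ℕ) : ℤ) (2 * d) := by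
  have hg : 0 < Int.gcd k d := Int.gcd_pos_of_ne_zero_left _ (by omega)
  obtain ⟨e, he⟩ : Int.gcd k d ∣ k := by
    have := Int.gcd_dvd_left (k : ℤ) d
    exact_mod_cast this
  obtain ⟨f, hf⟩ := Int.gcd_dvd_right (k : ℤ) d
  generalize hG : Int.gcd k d = w at *
  have hG2 : Int.gcd ((2 * k : ℕ) : ℤ) (2 * d) = 2 * w := by
    push_cast
    rw [Int.gcd_mul_left, hG]; rfl
  have hco : IsCoprime (e : ℤ) f := by
    rw [Int.isCoprime_iff_gcd_eq_one]
    rw [he, hf] at hG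
    push_cast at hG
    rw [Int.gcd_mul_left] at hG
    simp only [Int.natAbs_natCast] at hG
    exact Nat.eq_of_mul_eq_mul_left hg (by omega)
  have hval : m * (2 * k) / (2 * w) = m * e := by
    apply Nat.div_eq_of_eq_mul_left (by omega)
    rw [he]; ring
  rw [hG2, hval]
  have hw : (w : ℤ) ≠ 0 := by omega
  have hiff : ∀ N : ℕ, g ^ N = 1 ↔ m * e ∣ N := by
    intro N
    rw [h]
    constructor
    · rintro ⟨q, h1, h2⟩
      rw [he, hf, mul_assoc] at h2
      push_cast at h2
      have h3 := hco.dvd_of_dvd_mul_left (Int.dvd_of_mul_dvd_mul_left hw h2)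
      have : ((m * e : ℕ) : ℤ) ∣ N := by
        rw [h1]; push_cast; exact mul_dvd_mul_left _ h3
      exact_mod_cast this
    · rintro ⟨s, rfl⟩
      refine ⟨e * s, by push_cast; ring, f * s, ?_⟩
      rw [he, hf]; push_cast; ring
  apply Nat.dvd_antisymm
  · exact orderOf_dvd_of_pow_eq_one ((hiff _).2 dvd_rfl)
  · exact (hiff _).1 (pow_orderOf_eq_one g)

/-- The orders of `x`, `y` and `x⁻¹y` in `G` are `n/2`, `mn/gcd(n,ℓ+m)` and
`mn/gcd(n,ℓ-m)` respectively. -/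
theorem statement6 (m n ℓ : ℕ) (hm : 0 < m) (hn : 4 ≤ n) (hne : Even n)
    (hl : ℓ ≤ n - 1) (hpar : ℓ % 2 = m % 2) :
    orderOf (genx m n ℓ) = n / 2 ∧
    orderOf (geny m n ℓ) = m * n / Int.gcd (n : ℤ) ((ℓ : ℤ) + m) ∧
    orderOf ((genx m n ℓ)⁻¹ * geny m n ℓ) = m * n / Int.gcd (n : ℤ) ((ℓ : ℤ) - m) := by
  obtain ⟨k, hk⟩ := hne
  have hk' : n / 2 = k := by omega
  have hn2 : n = 2 * k := by omega
  have hc : (ℓ : ℤ) + m = 2 * (((ℓ + m) / 2 : ℕ) : ℤ) := by omega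
  have hc' : (ℓ : ℤ) - m = 2 * ((((ℓ + m) / 2 : ℕ) : ℤ) - m) := by omega
  refine ⟨?_, ?_, ?_⟩
  · apply Nat.dvd_antisymm
    · exact orderOf_dvd_of_pow_eq_one (genx_pow m n ℓ)
    · obtain ⟨q, h1, h2⟩ := (key m n ℓ (orderOf (genx m n ℓ)) 0).1
        (by rw [zpow_natCast, pow_orderOf_eq_one]; simp)
      have hq : q = 0 := by
        rcases mul_eq_zero.1 h1.symm with h | h
        · omega
        · exact h
      rw [hq, mul_zero, add_zero] at h2
      exact_mod_cast h2
  · have := order_aux (geny m n ℓ) m k (((ℓ + m) / 2 : ℕ) : ℤ) (by omega) (by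
      intro N
      have := key m n ℓ 0 N
      rw [hk'] at this
      simpa using this)
    rw [hc, this, ← hn2]
  · have := order_aux ((genx m n ℓ)⁻¹ * geny m n ℓ) m k ((((ℓ + m) / 2 : ℕ) : ℤ) - m)
      (by omega) (by
      intro N
      have := key m n ℓ (-N) N
      rw [hk'] at this
      rw [(genxy_comm m n ℓ).inv_left.mul_pow, inv_pow, ← zpow_natCast, ← zpow_natCast, ← zpow_neg,
        this]
      refine exists_congr fun q => and_congr_right fun h => ?_
      rw [h, show -((m : ℤ) * q) + (((ℓ + m) / 2 : ℕ) : ℤ) * q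
        = ((((ℓ + m) / 2 : ℕ) : ℤ) - m) * q by ring])
    rw [hc', this, ← hn2]
end HTGPaper
end
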